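/- There do not exist a matrix M ∈ S(G138) and real numbers λ_1 < λ_2 < λ_3 such that the characteristic polynomial of M equals (X − λ_1) (X − λ_2)^3 (X − λ_3)^2, and there do not exist such M and λ_1 < λ_2 < λ_3 with characteristic polynomial (X − λ_1)^2 (X − λ_2)^3 (X − λ_3). That is, G138 attains neither ordered multiplicity list (1,3,2) nor (2,3,1). -/

import Mathlib

/-!
The order of the eigenvalues plays no role: no `M ∈ S(G138)` has characteristic polynomial
`(X - α) (X - β)³ (X - γ)²` for any real `α`, `β`, `γ`, distinct or not.

A real symmetric matrix is diagonalizable, so the rank of `p(M)` is at most the number of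
eigenvalues, with multiplicity, at which `p` does not vanish (`rank_aeval_le_countP`). Hence
`B = M - β` has rank at most `3` and `N = (M - β)(M - γ)` has rank at most `1`. All `4 × 4` minors
of `B` vanish; the one with rows `1,2,5,6` and columns `2,3,5,6` equals `m₁₂ m₂₃ B₅₅ B₆₆`, so
`B₅₅ = 0` or `B₆₆ = 0`. Let `k ∈ {5, 6}` be such a vertex. All `2 × 2` minors of `N` vanish, so
`N₁₃ Nₖₖ = N₁ₖ Nₖ₃`. As `k` is at distance `3` from vertex `1`, `N₁ₖ = 0`, whereas
`N₁₃ = m₁₂ m₂₃ ≠ 0`; therefore `Nₖₖ = 0`. But `Bₖₖ = 0` gives `Nₖₖ = m₃ₖ² + m₄ₖ² > 0`.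

In the code vertex `v` is the index `v - 1` of `Fin 6`.
-/

open Polynomial Matrix

/-- `M ∈ S(G)`: real symmetric matrix whose off-diagonal nonzero pattern is
given exactly by the adjacency of `G`. -/
def inS {V : Type*} (G : SimpleGraph V) (M : Matrix V V ℝ) : Prop :=
  M.IsSymm ∧ ∀ i j : V, i ≠ j → (M i j ≠ 0 ↔ G.Adj i j)

/-- The graph `G138` on vertices 1..6 (encoded as `Fin 6`, vertex `v` is `v.val + 1`). -/
def G138 : SimpleGraph (Fin 6) :=
  SimpleGraph.fromRel (fun i j =>
    ((i : ℕ) + 1, (j : ℕ) + 1) ∈ [(1, 2), (2, 3), (2, 4), (3, 4), (3, 5), (3, 6), (4, 5), (4, 6)])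

/-- Diagonalization bounds the rank of a polynomial in a Hermitian matrix. -/
theorem rank_aeval_le_countP {n : Type*} [Fintype n] [DecidableEq n] {A : Matrix n n ℝ}
    (hA : A.IsHermitian) (p : ℝ[X]) [DecidablePred fun x : ℝ => p.eval x ≠ 0] :
    (aeval A p).rank ≤ A.charpoly.roots.countP (fun x => p.eval x ≠ 0) := by
  -- Evaluating `p` commutes with the algebra homomorphism sending a vector to its diagonal matrix.
  have hdiag : aeval (diagonal hA.eigenvalues) p =
      diagonal (fun i => p.eval (hA.eigenvalues i)) := by
    have h := aeval_algHom_apply (Matrix.diagonalAlgHom (n := n) (α := ℝ) ℝ) hA.eigenvalues p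
    have h2 : aeval hA.eigenvalues p = fun i => p.eval (hA.eigenvalues i) := by
      ext i
      simp
    rw [h2] at h
    exact h
  have hconj : aeval A p = Unitary.conjStarAlgAut ℝ _ hA.eigenvectorUnitary
      (diagonal (fun i => p.eval (hA.eigenvalues i))) := by
    conv_lhs => rw [hA.spectral_theorem]
    rw [← hdiag]
    exact aeval_algHom_apply
      (Unitary.conjStarAlgAut ℝ _ hA.eigenvectorUnitary).toAlgEquiv.toAlgHom _ p
  rw [hconj, Unitary.conjStarAlgAut_apply]
  refine (rank_mul_le_left _ _).trans ((rank_mul_le_right _ _).trans ?_)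
  classical
  rw [rank_diagonal, hA.roots_charpoly_eq_eigenvalues, Multiset.countP_map, Fintype.card_subtype]
  apply le_of_eq
  rw [Finset.card_def, Finset.filter_val]
  congr

/-- A minor of size larger than the rank vanishes. -/
theorem det_submatrix_eq_zero_of_rank_lt {m n k : Type*} [Fintype n] [Fintype k]
    [DecidableEq k] (A : Matrix m n ℝ) (r : k → m) (c : k → n)
    (h : A.rank < Fintype.card k) : (A.submatrix r c).det = 0 := by
  by_contra hd
  have h1 := rank_of_det_ne_zero hd
  have h2 := rank_submatrix_le A r c
  omega

/-- No matrix in `S(G138)` has characteristic polynomial `(X - α) (X - β)³ (X - γ)²`. -/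
theorem G138_charpoly_ne {M : Matrix (Fin 6) (Fin 6) ℝ} (hM : inS G138 M) (α β γ : ℝ) :
    M.charpoly ≠ (X - C α) * (X - C β) ^ 3 * (X - C γ) ^ 2 := by
  classical
  intro hc
  obtain ⟨hs, hadj⟩ := hM
  have hH : M.IsHermitian := isHermitian_iff_isSymm.2 hs
  have hroots : M.charpoly.roots = {α, β, β, β, γ, γ} := by
    have : M.charpoly =
        (({α, β, β, β, γ, γ} : Multiset ℝ).map (fun a => X - C a)).prod := by
      rw [hc]; simp; ring
    rw [this, roots_multiset_prod_X_sub_C]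
  have hB : (M - algebraMap ℝ _ β).rank ≤ 3 := by
    have h := rank_aeval_le_countP hH (X - C β)
    rw [hroots] at h
    simp only [map_sub, aeval_X, aeval_C] at h
    refine h.trans ?_
    simp [← Multiset.cons_zero, Multiset.countP_cons]
    split_ifs <;> simp
  have hN : ((M - algebraMap ℝ _ β) * (M - algebraMap ℝ _ γ)).rank ≤ 1 := by
    have h := rank_aeval_le_countP hH ((X - C β) * (X - C γ))
    rw [hroots] at h
    simp only [map_sub, map_mul, aeval_X, aeval_C] at h
    refine h.trans ?_
    simp [← Multiset.cons_zero, Multiset.countP_cons]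
    split_ifs <;> simp
  have sym : ∀ i j, M i j = M j i := fun i j => hs.apply j i
  have z (i j : Fin 6) (hij : i ≠ j) (h : ¬ G138.Adj i j) : M i j = 0 := by
    by_contra h'
    exact h ((hadj i j hij).1 h')
  have e01 : M 0 1 ≠ 0 := (hadj 0 1 (by decide)).2 (by simp [G138])
  have e12 : M 1 2 ≠ 0 := (hadj 1 2 (by decide)).2 (by simp [G138])
  have e24 : M 2 4 ≠ 0 := (hadj 2 4 (by decide)).2 (by simp [G138])
  have e25 : M 2 5 ≠ 0 := (hadj 2 5 (by decide)).2 (by simp [G138])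
  have z02 : M 0 2 = 0 := z _ _ (by decide) (by simp [G138])
  have z03 : M 0 3 = 0 := z _ _ (by decide) (by simp [G138])
  have z04 : M 0 4 = 0 := z _ _ (by decide) (by simp [G138])
  have z05 : M 0 5 = 0 := z _ _ (by decide) (by simp [G138])
  have z14 : M 1 4 = 0 := z _ _ (by decide) (by simp [G138])
  have z15 : M 1 5 = 0 := z _ _ (by decide) (by simp [G138])
  have z45 : M 4 5 = 0 := z _ _ (by decide) (by simp [G138])
  -- The minor of `M - β` used here is lower triangular.
  have hprod : (M 4 4 - β) * (M 5 5 - β) = 0 := by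
    have h := det_submatrix_eq_zero_of_rank_lt (M - algebraMap ℝ _ β)
      ![0, 1, 4, 5] ![1, 2, 4, 5] (by simp; omega)
    have h' : M 0 1 * M 1 2 * ((M 4 4 - β) * (M 5 5 - β)) = 0 := by
      rw [← h, det_of_isLowerTriangular]
      · simp [Fin.prod_univ_succ, algebraMap_matrix_apply, mul_assoc]
      · intro i j hij
        rw [OrderDual.toDual_lt_toDual] at hij
        fin_cases i <;> fin_cases j <;>
          simp [algebraMap_matrix_apply, z02, z04, z05, z14, z15, z45] at hij ⊢
    simpa [e01, e12] using h'
  have hminor (k : Fin 6) :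
      ((M - algebraMap ℝ _ β) * (M - algebraMap ℝ _ γ)) 0 2 *
        ((M - algebraMap ℝ _ β) * (M - algebraMap ℝ _ γ)) k k =
      ((M - algebraMap ℝ _ β) * (M - algebraMap ℝ _ γ)) 0 k *
        ((M - algebraMap ℝ _ β) * (M - algebraMap ℝ _ γ)) k 2 := by
    have h := det_submatrix_eq_zero_of_rank_lt
      ((M - algebraMap ℝ _ β) * (M - algebraMap ℝ _ γ)) ![0, k] ![2, k] (by simp; omega)
    rw [det_fin_two] at h
    simp only [submatrix_apply, cons_val_zero, cons_val_one] at h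
    linarith
  -- In both cases the minor relation reduces to `Nₖₖ = 0`, a sum of two squares.
  rcases mul_eq_zero.1 hprod with h | h
  · have hk := hminor 4
    simp [mul_apply, Fin.sum_univ_six, algebraMap_matrix_apply, z02, z03, z04, z05, z14, z45,
      sym 4 0, sym 4 1, sym 4 2, sym 4 3, h, e01, e12] at hk
    linarith [mul_self_nonneg (M 3 4), mul_self_pos.2 e24]
  · have hk := hminor 5
    simp [mul_apply, Fin.sum_univ_six, algebraMap_matrix_apply, z02, z03, z04, z05, z15, z45,
      sym 5 0, sym 5 1, sym 5 2, sym 5 3, sym 5 4, h, e01, e12] at hk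
    linarith [mul_self_nonneg (M 3 5), mul_self_pos.2 e25]

theorem G138_not_132_231 :
    (¬ ∃ (M : Matrix (Fin 6) (Fin 6) ℝ) (l₁ l₂ l₃ : ℝ),
        inS G138 M ∧ l₁ < l₂ ∧ l₂ < l₃ ∧
        M.charpoly = (X - C l₁) * (X - C l₂) ^ 3 * (X - C l₃) ^ 2) ∧
    (¬ ∃ (M : Matrix (Fin 6) (Fin 6) ℝ) (l₁ l₂ l₃ : ℝ),
        inS G138 M ∧ l₁ < l₂ ∧ l₂ < l₃ ∧
        M.charpoly = (X - C l₁) ^ 2 * (X - C l₂) ^ 3 * (X - C l₃)) := by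
  constructor
  · rintro ⟨M, l₁, l₂, l₃, hM, -, -, hc⟩
    exact G138_charpoly_ne hM l₁ l₂ l₃ hc
  · rintro ⟨M, l₁, l₂, l₃, hM, -, -, hc⟩
    exact G138_charpoly_ne hM l₃ l₂ l₁ (by rw [hc]; ring)
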